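/- The number of permutation tableaux contained in a k×(n-k) rectangle (with n-k columns) having exactly n-k ones (the minimum possible, one per column), summed over all k from 0 to n, equals the n-th Catalan number; equivalently, these tableaux are in bijection with permutations of {1,...,n} avoiding the generalized pattern (2-31). -/

import Mathlib

open Finset


def wexB {n : ℕ} (π : Equiv.Perm (Fin n)) : Finset (Fin n) :=
  Finset.univ.filter (fun i => i ≤ π i)

def wex {n : ℕ} (π : Equiv.Perm (Fin n)) : ℕ := (wexB π).card

def wexbotsum {n : ℕ} (π : Equiv.Perm (Fin n)) : ℕ := ∑ i ∈ wexB π, (i.val + 1)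

def wextopsum {n : ℕ} (π : Equiv.Perm (Fin n)) : ℕ := ∑ i ∈ wexB π, ((π i).val + 1)

def wexbotsSet {n : ℕ} (π : Equiv.Perm (Fin n)) : Finset ℕ :=
  (wexB π).image (fun i => i.val + 1)

def wextopsSet {n : ℕ} (π : Equiv.Perm (Fin n)) : Finset ℕ :=
  (wexB π).image (fun i => (π i).val + 1)

/-- `A_EE`: pairs `(i,j)` with `j < i ≤ π i < π j`. -/
def AEE {n : ℕ} (π : Equiv.Perm (Fin n)) : ℕ :=
  (Finset.univ.filter (fun p : Fin n × Fin n =>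
    p.2 < p.1 ∧ p.1 ≤ π p.1 ∧ π p.1 < π p.2)).card

/-- `A_NN`: pairs `(i,j)` with `π j < π i < i < j`. -/
def ANN {n : ℕ} (π : Equiv.Perm (Fin n)) : ℕ :=
  (Finset.univ.filter (fun p : Fin n × Fin n =>
    π p.2 < π p.1 ∧ π p.1 < p.1 ∧ p.1 < p.2)).card

/-- `A_EN`: pairs `(i,j)` with `j ≤ π j < π i < i`. -/
def AEN {n : ℕ} (π : Equiv.Perm (Fin n)) : ℕ :=
  (Finset.univ.filter (fun p : Fin n × Fin n =>
    p.2 ≤ π p.2 ∧ π p.2 < π p.1 ∧ π p.1 < p.1)).card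

/-- `A_NE`: pairs `(i,j)` with `π i < i < j ≤ π j`. -/
def ANE {n : ℕ} (π : Equiv.Perm (Fin n)) : ℕ :=
  (Finset.univ.filter (fun p : Fin n × Fin n =>
    π p.1 < p.1 ∧ p.1 < p.2 ∧ p.2 ≤ π p.2)).card

/-- `C_EE`: pairs `(i,j)` with `j < i ≤ π j < π i`. -/
def CEE {n : ℕ} (π : Equiv.Perm (Fin n)) : ℕ :=
  (Finset.univ.filter (fun p : Fin n × Fin n =>
    p.2 < p.1 ∧ p.1 ≤ π p.2 ∧ π p.2 < π p.1)).card

/-- `C_NN`: pairs `(i,j)` with `π i < π j < i < j`. -/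
def CNN {n : ℕ} (π : Equiv.Perm (Fin n)) : ℕ :=
  (Finset.univ.filter (fun p : Fin n × Fin n =>
    π p.1 < π p.2 ∧ π p.2 < p.1 ∧ p.1 < p.2)).card

def descents {n : ℕ} (π : Equiv.Perm (Fin n)) : Finset (Fin n) :=
  Finset.univ.filter (fun i => ∃ h : i.val + 1 < n, π ⟨i.val + 1, h⟩ < π i)

def des {n : ℕ} (π : Equiv.Perm (Fin n)) : ℕ := (descents π).card

def destopsum {n : ℕ} (π : Equiv.Perm (Fin n)) : ℕ :=
  ∑ i ∈ descents π, ((π i).val + 1)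

def desbotsum {n : ℕ} (π : Equiv.Perm (Fin n)) : ℕ :=
  ∑ i ∈ descents π, (if h : i.val + 1 < n then (π ⟨i.val + 1, h⟩).val + 1 else 0)

def destopsSet {n : ℕ} (π : Equiv.Perm (Fin n)) : Finset ℕ :=
  (descents π).image (fun i => (π i).val + 1)

def desbotsSet {n : ℕ} (π : Equiv.Perm (Fin n)) : Finset ℕ :=
  (descents π).image
    (fun i => if h : i.val + 1 < n then (π ⟨i.val + 1, h⟩).val + 1 else 0)

def maj {n : ℕ} (π : Equiv.Perm (Fin n)) : ℕ := ∑ i ∈ descents π, (i.val + 1)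

/-- Occurrences of the generalized pattern `(2-31)`. -/
def P2d31 {n : ℕ} (π : Equiv.Perm (Fin n)) : ℕ :=
  (Finset.univ.filter (fun p : Fin n × Fin n =>
    p.1 < p.2 ∧ ∃ h : p.2.val + 1 < n,
      π ⟨p.2.val + 1, h⟩ < π p.1 ∧ π p.1 < π p.2)).card

/-- Occurrences of the generalized pattern `(31-2)`. -/
def P31d2 {n : ℕ} (π : Equiv.Perm (Fin n)) : ℕ :=
  (Finset.univ.filter (fun p : Fin n × Fin n =>
    ∃ h : p.1.val + 1 < n, π ⟨p.1.val + 1, h⟩ < π p.1 ∧ p.1.val + 1 < p.2.val ∧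
      π ⟨p.1.val + 1, h⟩ < π p.2 ∧ π p.2 < π p.1)).card

/-- Occurrences of the generalized pattern `(21-3)`. -/
def P21d3 {n : ℕ} (π : Equiv.Perm (Fin n)) : ℕ :=
  (Finset.univ.filter (fun p : Fin n × Fin n =>
    ∃ h : p.1.val + 1 < n, π ⟨p.1.val + 1, h⟩ < π p.1 ∧ p.1.val + 1 < p.2.val ∧
      π p.1 < π p.2)).card

/-- Occurrences of the generalized pattern `(3-21)`. -/
def P3d21 {n : ℕ} (π : Equiv.Perm (Fin n)) : ℕ :=
  (Finset.univ.filter (fun p : Fin n × Fin n =>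
    p.1 < p.2 ∧ ∃ h : p.2.val + 1 < n,
      π ⟨p.2.val + 1, h⟩ < π p.2 ∧ π p.2 < π p.1)).card

/-- Occurrences of the generalized pattern `(1-32)`. -/
def P1d32 {n : ℕ} (π : Equiv.Perm (Fin n)) : ℕ :=
  (Finset.univ.filter (fun p : Fin n × Fin n =>
    p.1 < p.2 ∧ ∃ h : p.2.val + 1 < n,
      π ⟨p.2.val + 1, h⟩ < π p.2 ∧ π p.1 < π ⟨p.2.val + 1, h⟩)).card

/-- Occurrences of the generalized pattern `(32-1)`. -/
def P32d1 {n : ℕ} (π : Equiv.Perm (Fin n)) : ℕ :=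
  (Finset.univ.filter (fun p : Fin n × Fin n =>
    ∃ h : p.1.val + 1 < n, π ⟨p.1.val + 1, h⟩ < π p.1 ∧ p.1.val + 1 < p.2.val ∧
      π p.2 < π ⟨p.1.val + 1, h⟩)).card


/-- A permutation tableau with `n-k` columns, encoded as a `{0,1,2}`-filling of the full
`k × m` rectangle: the `2`'s are the boxes outside the Young diagram (southeast corner). -/
def IsPermTableau {k m : ℕ} (T : Fin k → Fin m → Fin 3) : Prop :=
  (∀ j : Fin m, ∃ i : Fin k, T i j = 1) ∧
  (∀ (i : Fin k) (j : Fin m), T i j ≠ 2 →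
    ∀ (i' : Fin k) (j' : Fin m), i' ≤ i → j' ≤ j → T i' j' ≠ 2) ∧
  (∀ (i : Fin k) (j : Fin m), T i j = 0 →
    ¬ ((∃ i' < i, T i' j = 1) ∧ (∃ j' < j, T i j' = 1)))

def rowLen {k m : ℕ} (T : Fin k → Fin m → Fin 3) (i : Fin k) : ℕ :=
  (Finset.univ.filter (fun j => T i j ≠ 2)).card

def zerosT {k m : ℕ} (T : Fin k → Fin m → Fin 3) : ℕ :=
  ∑ i, (Finset.univ.filter (fun j => T i j = 0)).card

def onesT {k m : ℕ} (T : Fin k → Fin m → Fin 3) : ℕ :=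
  ∑ i, (Finset.univ.filter (fun j => T i j = 1)).card

def twosT {k m : ℕ} (T : Fin k → Fin m → Fin 3) : ℕ :=
  ∑ i, (Finset.univ.filter (fun j => T i j = 2)).card

/-- A valid `0/1`-filling of the Young diagram with row lengths `lam`. -/
def ValidFilling {k : ℕ} (lam : Fin k → ℕ) (F : ∀ i : Fin k, Fin (lam i) → Bool) : Prop :=
  (∀ (i : Fin k) (j : Fin (lam i)), ∃ (i' : Fin k) (h : (j : ℕ) < lam i'), F i' ⟨j, h⟩ = true) ∧
  (∀ (i : Fin k) (j : Fin (lam i)), F i j = false →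
    ¬ ((∃ (i' : Fin k) (h : (j : ℕ) < lam i'), i' < i ∧ F i' ⟨j, h⟩ = true) ∧
       (∃ j' : Fin (lam i), j' < j ∧ F i j' = true)))

def fillZeros {k : ℕ} {lam : Fin k → ℕ} (F : ∀ i : Fin k, Fin (lam i) → Bool) : ℕ :=
  ∑ i, (Finset.univ.filter (fun j => F i j = false)).card

def fillOnes {k : ℕ} {lam : Fin k → ℕ} (F : ∀ i : Fin k, Fin (lam i) → Bool) : ℕ :=
  ∑ i, (Finset.univ.filter (fun j => F i j = true)).card

open Classical in
/-- `F_λ(p,q)`, evaluated at integers `p`, `q`: the sum over valid fillings of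
`p ^ (#0's) * q ^ (#1's)`. -/
noncomputable def Fval {k : ℕ} (lam : Fin k → ℕ) (p q : ℤ) : ℤ :=
  ∑ F ∈ Finset.univ.filter
      (fun F : ∀ i : Fin k, Fin (lam i) → Bool => ValidFilling lam F),
    p ^ fillZeros F * q ^ fillOnes F

/-! ### The generating tree -/

/-- Number of sequences of length `n` starting in state `h`, where a state `h` may be followed
by any state in `1, …, h+1`. -/
def treeCount : ℕ → ℕ → ℕ
  | 0, _ => 1
  | n + 1, h => ∑ i ∈ Finset.range (h + 1), treeCount n (i + 1)

theorem treeCount_succ (n h : ℕ) :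
    treeCount (n + 1) h = ∑ i ∈ Finset.range (h + 1), treeCount n (i + 1) := rfl

theorem treeCount_closed (n : ℕ) : ∀ h : ℕ,
    treeCount (n + 1) h + (2 * n + 2 + h).choose n = (2 * n + 2 + h).choose (n + 1) := by
  induction n with
  | zero =>
    intro h
    simp [treeCount]
    omega
  | succ n ih =>
    intro h
    induction h with
    | zero =>
      rw [treeCount_succ]
      simp only [zero_add, Finset.range_one, Finset.sum_singleton]
      have h1 := ih 1
      have e : 2 * (n + 1) + 2 + 0 = (2 * n + 2 + 1) + 1 := by ring
      have p1 : (2 * n + 2 + 1 + 1).choose (n + 1) =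
          (2 * n + 2 + 1).choose n + (2 * n + 2 + 1).choose (n + 1) := Nat.choose_succ_succ' _ _
      have p2 : (2 * n + 2 + 1 + 1).choose (n + 1 + 1) =
          (2 * n + 2 + 1).choose (n + 1) + (2 * n + 2 + 1).choose (n + 1 + 1) :=
        Nat.choose_succ_succ' _ _
      rw [e, p1, p2]
      have h2 : (2 * n + 2 + 1).choose (n + 1) = (2 * n + 2 + 1).choose (n + 1 + 1) := by
        apply Nat.choose_symm_of_eq_add
        ring
      omega
    | succ h ihh =>
      have h1 := ih (h + 2)
      have e : 2 * (n + 1) + 2 + (h + 1) = (2 * n + 2 + (h + 2)) + 1 := by ring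
      have e2 : 2 * (n + 1) + 2 + h = (2 * n + 2 + (h + 2)) := by ring
      rw [treeCount_succ, Finset.sum_range_succ, ← treeCount_succ, e, Nat.choose_succ_succ',
        Nat.choose_succ_succ' _ (n + 1)]
      rw [e2] at ihh
      have e3 : h + 1 + 1 = h + 2 := rfl
      rw [e3]
      omega

theorem treeCount_catalan (n : ℕ) : treeCount n 0 = catalan n := by
  cases n with
  | zero => simp [treeCount]
  | succ n =>
    have h := treeCount_closed n 0
    have e : 2 * n + 2 + 0 = 2 * (n + 1) := by ring
    rw [e] at h
    have hc : (2 * (n + 1)).choose (n + 1) = (n + 2) * catalan (n + 1) := by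
      have := succ_mul_catalan_eq_centralBinom (n + 1)
      rw [Nat.centralBinom_eq_two_mul_choose] at this
      exact this.symm
    have h3 := Nat.choose_succ_right_eq (2 * (n + 1)) n
    have e4 : 2 * (n + 1) - n = n + 2 := by omega
    rw [e4, hc] at h3
    have h4 : (2 * (n + 1)).choose n = (n + 1) * catalan (n + 1) := by
      have : 0 < n + 2 := by omega
      apply Nat.eq_of_mul_eq_mul_right this
      rw [← h3]; ring
    rw [hc, h4] at h
    nlinarith

/-! ### Permutations avoiding (2-31) -/

/-- Append the value `v` at the end of the word of `σ`, after shifting. -/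
def appendLast {n : ℕ} (v : Fin (n + 1)) (σ : Equiv.Perm (Fin n)) : Equiv.Perm (Fin (n + 1)) :=
  (finSuccEquiv' (Fin.last n)).trans ((Equiv.optionCongr σ).trans (finSuccEquiv' v).symm)

theorem appendLast_last {n : ℕ} (v : Fin (n + 1)) (σ : Equiv.Perm (Fin n)) :
    appendLast v σ (Fin.last n) = v := by
  simp [appendLast]

theorem appendLast_castSucc {n : ℕ} (v : Fin (n + 1)) (σ : Equiv.Perm (Fin n)) (i : Fin n) :
    appendLast v σ i.castSucc = v.succAbove (σ i) := by
  have : i.castSucc = (Fin.last n).succAbove i := by simp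
  rw [this]
  simp only [appendLast, Equiv.trans_apply, finSuccEquiv'_succAbove]
  simp

theorem appendLast_bijective (n : ℕ) :
    Function.Bijective (fun p : Equiv.Perm (Fin n) × Fin (n + 1) => appendLast p.2 p.1) := by
  rw [Fintype.bijective_iff_injective_and_card]
  constructor
  · rintro ⟨σ, v⟩ ⟨τ, w⟩ h
    simp only at h
    have hv : v = w := by
      rw [← appendLast_last v σ, h, appendLast_last]
    subst hv
    have : σ = τ := by
      ext i
      have h2 := congrArg (fun e : Equiv.Perm (Fin (n + 1)) => e i.castSucc) h
      simp only [appendLast_castSucc] at h2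
      rw [Fin.succAbove_right_injective h2]
    rw [this]
  · simp [Fintype.card_perm, Nat.factorial_succ, mul_comm]

theorem P2d31_eq_zero_iff {n : ℕ} (π : Equiv.Perm (Fin n)) :
    P2d31 π = 0 ↔ ∀ i j : Fin n, i < j → ∀ h : j.val + 1 < n,
      π ⟨j.val + 1, h⟩ < π i → ¬ π i < π j := by
  unfold P2d31
  rw [Finset.card_eq_zero, Finset.filter_eq_empty_iff]
  constructor
  · intro H i j hij h h1 h2
    exact H (Finset.mem_univ (i, j)) ⟨hij, h, h1, h2⟩
  · rintro H ⟨i, j⟩ - ⟨hij, h, h1, h2⟩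
    exact H i j hij h h1 h2

theorem appendLast_avoids {n : ℕ} (v : Fin (n + 2)) (σ : Equiv.Perm (Fin (n + 1))) :
    P2d31 (appendLast v σ) = 0 ↔ P2d31 σ = 0 ∧ (σ (Fin.last n)).val ≤ v.val := by
  rw [P2d31_eq_zero_iff, P2d31_eq_zero_iff]
  constructor
  · intro H
    constructor
    · intro i j hij h h1 h2
      apply H i.castSucc j.castSucc (by simpa using hij) (by simp; omega)
      · have : (⟨j.castSucc.val + 1, by simp; omega⟩ : Fin (n + 2))
            = (⟨j.val + 1, h⟩ : Fin (n + 1)).castSucc := by ext; simp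
        rw [this, appendLast_castSucc, appendLast_castSucc]
        exact Fin.strictMono_succAbove v h1
      · rw [appendLast_castSucc, appendLast_castSucc]
        exact Fin.strictMono_succAbove v h2
    · by_contra hlt
      push Not at hlt
      have hs := (σ (Fin.last n)).isLt
      have hvlt : v.val < n + 1 := by omega
      obtain ⟨i, hi⟩ := σ.surjective ⟨v.val, hvlt⟩
      have hne : i ≠ Fin.last n := by
        rintro rfl
        rw [hi] at hlt
        simp at hlt
      have hil : i < Fin.last n := lt_of_le_of_ne (Fin.le_last i) hne
      apply H i.castSucc (Fin.last n).castSucc (by simpa using hil) (by simp)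
      · have : (⟨(Fin.last n).castSucc.val + 1, by simp⟩ : Fin (n + 2)) = Fin.last (n + 1) := by
          ext; simp
        rw [this, appendLast_last, appendLast_castSucc, Fin.lt_succAbove_iff_le_castSucc, hi]
        rw [Fin.le_def]; simp
      · rw [appendLast_castSucc, appendLast_castSucc]
        apply Fin.strictMono_succAbove v
        rw [hi, Fin.lt_def]
        exact hlt
  · rintro ⟨H, hv⟩ i j hij h h1 h2
    have hjn : j.val < n + 1 := by omega
    have hin : i.val < n + 1 := by rw [Fin.lt_def] at hij; omega
    obtain ⟨j, rfl⟩ : ∃ j' : Fin (n + 1), j = j'.castSucc := ⟨⟨j.val, hjn⟩, by ext; simp⟩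
    obtain ⟨i, rfl⟩ : ∃ i' : Fin (n + 1), i = i'.castSucc := ⟨⟨i.val, hin⟩, by ext; simp⟩
    rw [appendLast_castSucc, appendLast_castSucc] at h2
    have h2' := (Fin.strictMono_succAbove v).lt_iff_lt.mp h2
    by_cases hj : j.val + 1 < n + 1
    · have : (⟨j.castSucc.val + 1, h⟩ : Fin (n + 2))
            = (⟨j.val + 1, hj⟩ : Fin (n + 1)).castSucc := by ext; simp
      rw [this, appendLast_castSucc, appendLast_castSucc] at h1
      exact H i j (by simpa using hij) hj ((Fin.strictMono_succAbove v).lt_iff_lt.mp h1) h2'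
    · have hjl : j = Fin.last n := by ext; simp; omega
      subst hjl
      have : (⟨(Fin.last n).castSucc.val + 1, h⟩ : Fin (n + 2)) = Fin.last (n + 1) := by
          ext; simp
      rw [this, appendLast_last, appendLast_castSucc, Fin.lt_succAbove_iff_le_castSucc,
        Fin.le_def] at h1
      rw [Fin.lt_def] at h2'
      simp at h1
      omega

theorem sum_ge_reflect (n a : ℕ) (ha : a ≤ n) (w : ℕ → ℕ) :
    (∑ v : Fin (n + 2), if a ≤ v.val then w (n + 2 - v.val) else 0)
      = ∑ i ∈ Finset.range (n + 1 - a + 1), w (i + 1) := by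
  rw [Fin.sum_univ_eq_sum_range (fun v => if a ≤ v then w (n + 2 - v) else 0) (n + 2),
    ← Finset.sum_filter]
  apply Finset.sum_nbij' (fun v => n + 1 - v) (fun i => n + 1 - i)
  · intro v; simp; omega
  · intro v; simp; omega
  · intro v; simp; omega
  · intro v; simp; omega
  · intro v hv
    simp at hv
    congr 1; omega

theorem sum_perm_step (n : ℕ) (w : ℕ → ℕ) :
    (∑ π : Equiv.Perm (Fin (n + 2)),
      if P2d31 π = 0 then w (n + 2 - (π (Fin.last (n + 1))).val) else 0) =
    ∑ σ : Equiv.Perm (Fin (n + 1)), if P2d31 σ = 0 then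
      (∑ i ∈ Finset.range (n + 1 - (σ (Fin.last n)).val + 1), w (i + 1)) else 0 := by
  rw [← (appendLast_bijective (n + 1)).sum_comp, Fintype.sum_prod_type]
  apply Finset.sum_congr rfl
  intro σ _
  simp only [appendLast_avoids, appendLast_last]
  by_cases h : P2d31 σ = 0
  · simp only [h, true_and, if_true]
    exact sum_ge_reflect n _ (by have := (σ (Fin.last n)).isLt; omega) w
  · simp [h]

theorem sum_perm_tree (n : ℕ) : ∀ j : ℕ,
    (∑ π : Equiv.Perm (Fin (n + 1)),
      if P2d31 π = 0 then treeCount j (n + 1 - (π (Fin.last n)).val) else 0) =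
    treeCount (n + j) 1 := by
  induction n with
  | zero =>
    intro j
    have : ∀ π : Equiv.Perm (Fin (0 + 1)), P2d31 π = 0 := by decide
    simp [this]
  | succ n ih =>
    intro j
    rw [sum_perm_step]
    simp only [← treeCount_succ]
    rw [ih (j + 1)]
    congr 1; omega

theorem card_avoiders (n : ℕ) :
    (Finset.univ.filter (fun π : Equiv.Perm (Fin n) => P2d31 π = 0)).card = catalan n := by
  cases n with
  | zero => simp [P2d31]
  | succ n =>
    rw [Finset.card_filter]
    have := sum_perm_tree n 0
    simp only [treeCount] at this
    rw [this, ← treeCount_catalan, treeCount_succ]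
    simp

/-! ### Tableaux encoded as lists of columns -/

/-- Rows that are still available: those with no 0 below a 1. A column is a pair
(length, row of its 1). -/
def availRows (k : ℕ) (L : List (ℕ × ℕ)) : Finset ℕ :=
  (Finset.range k).filter (fun i => ∀ p ∈ L, ¬ (p.2 < i ∧ i < p.1))

/-- Column lists of tableaux with `k` rows and `m` columns. -/
def colLists : ℕ → ℕ → Finset (List (ℕ × ℕ))
  | _, 0 => {[]}
  | 0, _ + 1 => ∅
  | k + 1, m + 1 => colLists k (m + 1) ∪
      (colLists (k + 1) m).biUnion
        (fun L => (availRows (k + 1) L).image (fun r => (k + 1, r) :: L))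
  termination_by k m => k + m

theorem colLists_zero_right (k : ℕ) : colLists k 0 = {[]} := by
  cases k <;> simp [colLists]

theorem mem_colLists (k m : ℕ) (L : List (ℕ × ℕ)) :
    L ∈ colLists k m ↔ L.length = m ∧ (∀ p ∈ L, p.1 ≤ k ∧ p.2 < p.1) ∧
      L.Pairwise (fun p q => q.1 ≤ p.1 ∧ ¬ (q.2 < p.2 ∧ p.2 < q.1)) := by
  induction k, m using colLists.induct generalizing L with
  | case1 k =>
    rw [colLists_zero_right]
    simp only [Finset.mem_singleton, List.length_eq_zero_iff]
    constructor
    · rintro rfl; simp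
    · exact fun h => h.1
  | case2 m =>
    simp only [colLists, Finset.notMem_empty, false_iff]
    rintro ⟨h1, h2, -⟩
    cases L with
    | nil => simp at h1
    | cons p L =>
      have := h2 p (by simp)
      omega
  | case3 k m ih1 ih2 =>
    simp only [colLists, Finset.mem_union, ih1, Finset.mem_biUnion, ih2, Finset.mem_image]
    constructor
    · rintro (⟨h1, h2, h3⟩ | ⟨L, ⟨h1, h2, h3⟩, r, hr, rfl⟩)
      · exact ⟨h1, fun p hp => ⟨by have := h2 p hp; omega, (h2 p hp).2⟩, h3⟩
      · simp only [availRows, Finset.mem_filter, Finset.mem_range] at hr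
        refine ⟨by simp [h1], ?_, ?_⟩
        · intro p hp
          rcases List.mem_cons.mp hp with rfl | hp
          · exact ⟨le_refl _, hr.1⟩
          · exact h2 p hp
        · rw [List.pairwise_cons]
          exact ⟨fun p hp => ⟨(h2 p hp).1, hr.2 p hp⟩, h3⟩
    · rintro ⟨h1, h2, h3⟩
      cases L with
      | nil => simp at h1
      | cons p L =>
        obtain ⟨l, r⟩ := p
        rw [List.pairwise_cons] at h3
        have hp := h2 (l, r) (by simp)
        simp only at hp
        by_cases hl : l = k + 1
        · subst hl
          right
          refine ⟨L, ⟨by simpa using h1, fun p hp => h2 p (by simp [hp]), h3.2⟩, r, ?_, rfl⟩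
          simp only [availRows, Finset.mem_filter, Finset.mem_range]
          exact ⟨hp.2, fun p hp => (h3.1 p hp).2⟩
        · left
          refine ⟨h1, ?_, List.pairwise_cons.mpr h3⟩
          intro p hp'
          refine ⟨?_, (h2 p hp').2⟩
          rcases List.mem_cons.mp hp' with rfl | hp'
          · simp only; omega
          · have := (h3.1 p hp').1
            simp only at this
            omega

theorem sum_rank (s : Finset ℕ) (w : ℕ → ℕ) :
    ∑ r ∈ s, w ((s.filter (fun i => i ≤ r)).card) = ∑ i ∈ Finset.range s.card, w (i + 1) := by
  induction s using Finset.induction_on_max with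
  | empty => simp
  | insert a s ha ih =>
    have hna : a ∉ s := fun h => lt_irrefl _ (ha a h)
    rw [Finset.sum_insert hna, Finset.card_insert_of_notMem hna, Finset.sum_range_succ, ← ih,
      add_comm]
    congr 1
    · apply Finset.sum_congr rfl
      intro r hr
      rw [Finset.filter_insert, if_neg (by have := ha r hr; omega)]
    · rw [Finset.filter_true_of_mem, Finset.card_insert_of_notMem hna]
      intro i hi
      rcases Finset.mem_insert.mp hi with rfl | hi
      · exact le_refl _
      · exact (ha i hi).le

theorem availRows_cons (k r : ℕ) (L : List (ℕ × ℕ)) :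
    availRows k ((k, r) :: L) = (availRows k L).filter (fun i => i ≤ r) := by
  ext i
  simp only [availRows, Finset.mem_filter, Finset.mem_range, List.forall_mem_cons]
  constructor
  · rintro ⟨h1, h2, h3⟩
    exact ⟨⟨h1, h3⟩, by omega⟩
  · rintro ⟨⟨h1, h3⟩, h2⟩
    exact ⟨h1, by omega, h3⟩

theorem availRows_succ (k m : ℕ) (L : List (ℕ × ℕ)) (hL : L ∈ colLists k m) :
    (availRows (k + 1) L).card = (availRows k L).card + 1 := by
  rw [mem_colLists] at hL
  have : availRows (k + 1) L = insert k (availRows k L) := by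
    unfold availRows
    rw [Finset.range_add_one, Finset.filter_insert, if_pos]
    intro p hp
    have := (hL.2.1 p hp).1
    omega
  rw [this, Finset.card_insert_of_notMem]
  simp [availRows]

/-- Weighted count of column lists. -/
def wsum (k m : ℕ) (w : ℕ → ℕ) : ℕ := ∑ L ∈ colLists k m, w (availRows k L).card

/-- Contribution of the tableaux whose first column is full. -/
def wsumCol (k : ℕ) : ℕ → (ℕ → ℕ) → ℕ
  | 0, _ => 0
  | m + 1, w => wsum k m (fun h => ∑ i ∈ Finset.range h, w (i + 1))

theorem wsum_succ (k m : ℕ) (w : ℕ → ℕ) :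
    wsum (k + 1) m w = wsum k m (fun h => w (h + 1)) + wsumCol (k + 1) m w := by
  cases m with
  | zero => simp [wsum, wsumCol, colLists_zero_right, availRows]
  | succ m =>
    unfold wsum wsumCol
    rw [colLists, Finset.sum_union, Finset.sum_biUnion]
    · congr 1
      · apply Finset.sum_congr rfl
        intro L hL
        rw [availRows_succ k _ L hL]
      · apply Finset.sum_congr rfl
        intro L hL
        rw [Finset.sum_image (by intro a _ b _ h; simpa using h)]
        simp only [availRows_cons]
        exact sum_rank _ _
    · intro L _ L' _ hne
      rw [Function.onFun, Finset.disjoint_left]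
      intro x hx hx'
      obtain ⟨r, -, rfl⟩ := Finset.mem_image.mp hx
      obtain ⟨r', -, h⟩ := Finset.mem_image.mp hx'
      simp at h
      exact hne h.2.symm
    · rw [Finset.disjoint_left]
      intro x hx hx'
      obtain ⟨L, -, hx'⟩ := Finset.mem_biUnion.mp hx'
      obtain ⟨r, -, rfl⟩ := Finset.mem_image.mp hx'
      have := ((mem_colLists _ _ _).mp hx).2.1 _ (List.mem_cons_self)
      simp at this

theorem wsum_zero_left (m : ℕ) (w : ℕ → ℕ) : wsum 0 (m + 1) w = 0 := by
  simp [wsum, colLists]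

theorem antidiag_step (n : ℕ) (w : ℕ → ℕ) :
    ∑ p ∈ Finset.HasAntidiagonal.antidiagonal (n + 1), wsum p.1 p.2 w =
    ∑ p ∈ Finset.HasAntidiagonal.antidiagonal n,
      wsum p.1 p.2 (fun h => ∑ i ∈ Finset.range (h + 1), w (i + 1)) := by
  have hR1 := Finset.Nat.sum_antidiagonal_succ (n := n) (f := fun p => wsumCol p.1 p.2 w)
  have hR2 := Finset.Nat.sum_antidiagonal_succ' (n := n) (f := fun p => wsumCol p.1 p.2 w)
  have h0 : wsumCol 0 (n + 1) w = 0 := by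
    rw [wsumCol]
    cases n with
    | zero => simp [wsum, colLists_zero_right, availRows]
    | succ n => exact wsum_zero_left _ _
  rw [Finset.Nat.sum_antidiagonal_succ]
  simp only [wsum_zero_left, wsum_succ, Finset.sum_add_distrib, zero_add]
  simp only [h0, zero_add] at hR1
  rw [← hR1, hR2]
  simp only [wsumCol, zero_add, ← Finset.sum_add_distrib]
  apply Finset.sum_congr rfl
  intro p _
  simp only [wsum, ← Finset.sum_add_distrib, Finset.sum_range_succ]
  apply Finset.sum_congr rfl
  intro L _
  ring

theorem antidiag_tree (n : ℕ) : ∀ j : ℕ,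
    ∑ p ∈ Finset.HasAntidiagonal.antidiagonal n, wsum p.1 p.2 (treeCount j) = treeCount (n + j) 0 := by
  induction n with
  | zero => intro j; simp [wsum, colLists_zero_right, availRows]
  | succ n ih =>
    intro j
    rw [antidiag_step]
    have := ih (j + 1)
    rw [show n + 1 + j = n + (j + 1) by ring, ← this]
    rfl

theorem sum_card_colLists (n : ℕ) :
    ∑ p ∈ Finset.HasAntidiagonal.antidiagonal n, (colLists p.1 p.2).card = catalan n := by
  rw [← treeCount_catalan]
  have := antidiag_tree n 0
  rw [add_zero] at this
  rw [← this]
  simp [wsum, treeCount]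

/-! ### From column lists to tableaux -/

/-- The filling attached to column data. -/
def decodeCols (k : ℕ) {m : ℕ} (c : Fin m → ℕ × ℕ) : Fin k → Fin m → Fin 3 :=
  fun i j => if (c j).1 ≤ i.val then 2 else if i.val = (c j).2 then 1 else 0

/-- Validity of column data. -/
def ColsOK (k : ℕ) {m : ℕ} (c : Fin m → ℕ × ℕ) : Prop :=
  (∀ j, (c j).1 ≤ k ∧ (c j).2 < (c j).1) ∧
  ∀ j j', j < j' → (c j').1 ≤ (c j).1 ∧ ¬ ((c j').2 < (c j).2 ∧ (c j).2 < (c j').1)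

theorem decode_eq_two {k m : ℕ} (c : Fin m → ℕ × ℕ) (i : Fin k) (j : Fin m) :
    decodeCols k c i j = 2 ↔ (c j).1 ≤ i.val := by
  unfold decodeCols
  split_ifs <;> simp_all

theorem decode_eq_one {k m : ℕ} (c : Fin m → ℕ × ℕ) (hc : ColsOK k c) (i : Fin k) (j : Fin m) :
    decodeCols k c i j = 1 ↔ i.val = (c j).2 := by
  have := (hc.1 j).2
  unfold decodeCols
  split_ifs <;> simp_all
  omega

theorem onesT_eq {k m : ℕ} (T : Fin k → Fin m → Fin 3) :
    onesT T = ∑ j, (Finset.univ.filter (fun i => T i j = 1)).card := by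
  unfold onesT
  simp only [Finset.card_filter]
  exact Finset.sum_comm

theorem decode_valid {k m : ℕ} (c : Fin m → ℕ × ℕ) (hc : ColsOK k c) :
    IsPermTableau (decodeCols k c) ∧ onesT (decodeCols k c) = m := by
  have hr : ∀ j, (c j).2 < k := fun j => by have := hc.1 j; omega
  refine ⟨⟨?_, ?_, ?_⟩, ?_⟩
  · intro j
    exact ⟨⟨(c j).2, hr j⟩, by rw [decode_eq_one c hc]⟩
  · intro i j h i' j' hi hj h'
    rw [Ne, decode_eq_two] at h
    rw [decode_eq_two] at h'
    rw [Fin.le_def] at hi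
    rcases eq_or_lt_of_le hj with rfl | hj
    · omega
    · have := (hc.2 _ _ hj).1
      omega
  · rintro i j h0 ⟨⟨i', hi', h1⟩, j', hj', h2⟩
    rw [decode_eq_one c hc] at h1 h2
    have h3 : ¬ (c j).1 ≤ i.val := by
      rw [← decode_eq_two, h0]; decide
    have := (hc.2 _ _ hj').2
    rw [Fin.lt_def] at hi'
    omega
  · rw [onesT_eq]
    have : ∀ j, (Finset.univ.filter (fun i => decodeCols k c i j = 1)).card = 1 := by
      intro j
      rw [Finset.card_eq_one]
      refine ⟨⟨(c j).2, hr j⟩, ?_⟩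
      ext i
      simp [decode_eq_one c hc, Fin.ext_iff]
    simp [this]

theorem decode_injective {k m : ℕ} (c d : Fin m → ℕ × ℕ) (hc : ColsOK k c) (hd : ColsOK k d)
    (h : decodeCols k c = decodeCols k d) : c = d := by
  funext j
  have h1 := hc.1 j
  have h2 := hd.1 j
  have e2 : ∀ i : Fin k, (c j).1 ≤ i.val ↔ (d j).1 ≤ i.val := by
    intro i
    rw [← decode_eq_two, ← decode_eq_two, h]
  have e1 : ∀ i : Fin k, i.val = (c j).2 ↔ i.val = (d j).2 := by
    intro i
    rw [← decode_eq_one c hc, ← decode_eq_one d hd, h]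
  ext
  · rcases lt_trichotomy (c j).1 (d j).1 with hlt | heq | hlt
    · have := (e2 ⟨(c j).1, by omega⟩).mp le_rfl
      simp only at this; omega
    · exact heq
    · have := (e2 ⟨(d j).1, by omega⟩).mpr le_rfl
      simp only at this; omega
  · exact (e1 ⟨(c j).2, by omega⟩).mp rfl

theorem exists_decode {k m : ℕ} (T : Fin k → Fin m → Fin 3) (hT : IsPermTableau T)
    (h1 : onesT T = m) : ∃ c : Fin m → ℕ × ℕ, ColsOK k c ∧ decodeCols k c = T := by
  obtain ⟨hex, hpart, hzero⟩ := hT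
  have hge : ∀ j, 1 ≤ (Finset.univ.filter (fun i => T i j = 1)).card := by
    intro j
    rw [Nat.one_le_iff_ne_zero, ← Nat.pos_iff_ne_zero, Finset.card_pos]
    obtain ⟨i, hi⟩ := hex j
    exact ⟨i, by simpa using hi⟩
  have hone : ∀ j, (Finset.univ.filter (fun i => T i j = 1)).card = 1 := by
    have hs : ∑ j : Fin m, 1 = ∑ j, (Finset.univ.filter (fun i => T i j = 1)).card := by
      rw [← onesT_eq, h1]; simp
    have := (Finset.sum_eq_sum_iff_of_le (fun j _ => hge j)).mp hs
    intro j
    exact (this j (Finset.mem_univ j)).symm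
  choose r hr using hex
  have hru : ∀ i j, T i j = 1 → i = r j := by
    intro i j hi
    exact Finset.card_le_one.mp (hone j).le i (by simpa using hi) (r j) (by simpa using hr j)
  have hlen : ∀ j, ∃ l : ℕ, l ≤ k ∧ ∀ i : Fin k, T i j = 2 ↔ l ≤ i.val := by
    intro j
    by_cases he : ∃ l : ℕ, ∃ h : l < k, T ⟨l, h⟩ j = 2
    · classical
      refine ⟨Nat.find he, (Nat.find_spec he).1.le, ?_⟩
      intro i
      constructor
      · intro hi
        exact Nat.find_min' he ⟨i.isLt, hi⟩
      · intro hi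
        by_contra hne
        exact hpart i j hne ⟨Nat.find he, (Nat.find_spec he).1⟩ j hi le_rfl (Nat.find_spec he).2
    · refine ⟨k, le_rfl, ?_⟩
      intro i
      constructor
      · intro hi
        exact absurd ⟨i.val, i.isLt, hi⟩ he
      · intro hi
        have := i.isLt
        omega
  choose l hlk hl using hlen
  have hrl : ∀ j, (r j).val < l j := by
    intro j
    by_contra h
    push Not at h
    rw [← hl, hr] at h
    exact absurd h (by decide)
  have h3 : ∀ x : Fin 3, x = 0 ∨ x = 1 ∨ x = 2 := by decide
  refine ⟨fun j => (l j, (r j).val), ⟨fun j => ⟨hlk j, hrl j⟩, ?_⟩, ?_⟩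
  · intro j j' hj
    constructor
    · by_contra h
      simp only [not_le] at h
      have hk : l j < k := lt_of_lt_of_le h (hlk j')
      have h2 : T ⟨l j, hk⟩ j = 2 := (hl j _).mpr le_rfl
      refine hpart ⟨l j, hk⟩ j' ?_ _ j le_rfl hj.le h2
      rw [Ne, hl]
      simpa using h
    · rintro ⟨ha, hb⟩
      simp only at ha hb
      have h0 : T (r j) j' = 0 := by
        rcases h3 (T (r j) j') with h | h | h
        · exact h
        · have := hru _ _ h
          rw [this] at ha
          omega
        · rw [hl] at h
          omega
      exact hzero _ _ h0 ⟨⟨r j', ha, hr j'⟩, j, hj, hr j⟩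
  · funext i j
    unfold decodeCols
    simp only
    split_ifs with ha hb
    · exact ((hl j i).mpr ha).symm
    · have : i = r j := Fin.ext hb
      rw [this, hr]
    · rcases h3 (T i j) with h | h | h
      · exact h.symm
      · exact absurd (congrArg Fin.val (hru _ _ h)) hb
      · exact absurd ((hl j i).mp h) ha

theorem card_tableaux (k m : ℕ) :
    Nat.card {T : Fin k → Fin m → Fin 3 // IsPermTableau T ∧ onesT T = m}
      = (colLists k m).card := by
  have e1 : Nat.card {c : Fin m → ℕ × ℕ // ColsOK k c} =
      Nat.card {T : Fin k → Fin m → Fin 3 // IsPermTableau T ∧ onesT T = m} := by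
    apply Nat.card_congr
    refine Equiv.ofBijective (fun c => ⟨decodeCols k c.1, decode_valid c.1 c.2⟩) ⟨?_, ?_⟩
    · rintro ⟨c, hc⟩ ⟨d, hd⟩ h
      simp only [Subtype.mk.injEq] at h
      exact Subtype.ext (decode_injective c d hc hd h)
    · rintro ⟨T, hT, h1⟩
      obtain ⟨c, hc, h⟩ := exists_decode T hT h1
      exact ⟨⟨c, hc⟩, Subtype.ext h⟩
  have hmem : ∀ c : Fin m → ℕ × ℕ, ColsOK k c ↔ List.ofFn c ∈ colLists k m := by
    intro c
    rw [mem_colLists, List.pairwise_ofFn]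
    simp [ColsOK]
  have e2 : Nat.card {c : Fin m → ℕ × ℕ // ColsOK k c} = Nat.card (colLists k m) := by
    apply Nat.card_congr
    refine Equiv.ofBijective (fun c => ⟨List.ofFn c.1, (hmem c.1).mp c.2⟩) ⟨?_, ?_⟩
    · rintro ⟨c, hc⟩ ⟨d, hd⟩ h
      simp only [Subtype.mk.injEq] at h
      exact Subtype.ext (List.ofFn_injective h)
    · rintro ⟨L, hL⟩
      obtain rfl : L.length = m := ((mem_colLists _ _ _).mp hL).1
      have hg : List.ofFn L.get = L := List.ofFn_get L
      exact ⟨⟨L.get, (hmem _).mpr (by rw [hg]; exact hL)⟩, Subtype.ext hg⟩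
  rw [← e1, e2, Nat.card_eq_fintype_card, Fintype.card_coe]

theorem sum_tableaux (n : ℕ) :
    (∑ k ∈ Finset.range (n + 1),
      Nat.card {T : Fin k → Fin (n - k) → Fin 3 //
        IsPermTableau T ∧ onesT T = n - k}) = catalan n := by
  simp only [card_tableaux]
  rw [← sum_card_colLists,
    Finset.Nat.sum_antidiagonal_eq_sum_range_succ (fun k m => (colLists k m).card)]

theorem minimal_ones_tableaux_catalan (n : ℕ) :
    (∑ k ∈ Finset.range (n + 1),
      Nat.card {T : Fin k → Fin (n - k) → Fin 3 //
        IsPermTableau T ∧ onesT T = n - k}) = catalan n ∧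
    (∑ k ∈ Finset.range (n + 1),
      Nat.card {T : Fin k → Fin (n - k) → Fin 3 //
        IsPermTableau T ∧ onesT T = n - k}) =
      (Finset.univ.filter (fun π : Equiv.Perm (Fin n) => P2d31 π = 0)).card := by
  exact ⟨sum_tableaux n, by rw [sum_tableaux, card_avoiders]⟩
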